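/- Fix p₀ ∈ (√2, 2) and let (q, p) be the global solution of (HS) with initial datum (q(0), p(0)) = (0, p₀). Then t ↦ q(t) is increasing on [0, +∞) and q(t) → +∞ as t → +∞. -/

import Mathlib

open Real Set Filter MeasureTheory
open scoped Topology

/-- The potential `g` from the Hamiltonian `H(x,p) = p²/2 + g(x)`. -/
noncomputable def g (x : ℝ) : ℝ := if |x| ≤ 1 then 1 - (1 - x ^ 2) ^ 4 else 1

/-- The derivative of `g`. -/
noncomputable def g' (x : ℝ) : ℝ := if |x| ≤ 1 then 8 * x * (1 - x ^ 2) ^ 3 else 0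

/-- `(q, p)` is a (global) solution of the Hamiltonian system (HS): `q̇ = p`, `ṗ = -g'(q)`. -/
def IsHSSol (q p : ℝ → ℝ) : Prop :=
  (∀ t : ℝ, HasDerivAt q (p t) t) ∧ (∀ t : ℝ, HasDerivAt p (-(g' (q t))) t)

/-- `F` is the flow of (HS): `F t q₀ p₀ = (q t, p t)` for the solution with data `(q₀, p₀)`. -/
def IsHSFlow (F : ℝ → ℝ → ℝ → ℝ × ℝ) : Prop :=
  ∀ q₀ p₀ : ℝ,
    IsHSSol (fun t => (F t q₀ p₀).1) (fun t => (F t q₀ p₀).2) ∧ F 0 q₀ p₀ = (q₀, p₀)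

/-- The set `([0,∞) × {2}) ∪ ({0} × (0,2])`, codomain of the map `Δ`. -/
def Dset : Set (ℝ × ℝ) := (Ici (0:ℝ) ×ˢ ({2} : Set ℝ)) ∪ ({(0:ℝ)} ×ˢ Ioc (0:ℝ) 2)

/-- `T` is the smallest positive period of `q`. -/
def IsSmallestPeriod (q : ℝ → ℝ) (T : ℝ) : Prop :=
  0 < T ∧ Function.Periodic q T ∧ ∀ T' : ℝ, 0 < T' → Function.Periodic q T' → T ≤ T'

/-- `T` is the period map `𝒯`, assigning to `p₀ ∈ (0, √2)` the smallest positive period of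
the `q`-component of the solution of (HS) with initial datum `(0, p₀)`. -/
def IsPeriodMap (F : ℝ → ℝ → ℝ → ℝ × ℝ) (T : ℝ → ℝ) : Prop :=
  ∀ p₀ ∈ Ioo (0:ℝ) (Real.sqrt 2), IsSmallestPeriod (fun t => (F t 0 p₀).1) (T p₀)

/-- `Δ` associates to `(t,x)` the datum in `Dset` whose orbit stays positive on `(0,t)`
and reaches `x` at time `t`. -/
def IsDeltaMap (F : ℝ → ℝ → ℝ → ℝ × ℝ) (Δ : ℝ → ℝ → ℝ × ℝ) : Prop :=
  ∀ t x : ℝ, 0 < t → 0 < x →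
    Δ t x ∈ Dset ∧ (F t (Δ t x).1 (Δ t x).2).1 = x ∧
      ∀ s ∈ Ioo (0:ℝ) t, 0 < (F s (Δ t x).1 (Δ t x).2).1

/-- The solution `u` of the conservation law built from the flow `F` and the map `Δ`
(extended by `0` at `x = 0`). -/
noncomputable def usol (F : ℝ → ℝ → ℝ → ℝ × ℝ) (Δ : ℝ → ℝ → ℝ × ℝ) (t x : ℝ) : ℝ :=
  if 0 < x then (F t (Δ t x).1 (Δ t x).2).2
  else if x < 0 then -(F t (Δ t (-x)).1 (Δ t (-x)).2).2
  else 0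

/-!
The energy `p² / 2 + V (q)` is conserved. If it exceeds an upper bound `M` of the potential by
`δ > 0`, then `p² ≥ 2δ` at all times, so the continuous function `p` cannot change sign: started
positive, it stays above `√(2δ)`. Hence `q` grows at least linearly. For `V = g` and the datum
`(0, p₀)` the bound is `M = 1` and the energy is `p₀² / 2`, which exceeds `1` when `p₀ > √2`.
-/

lemma sqrt_le_of_le_sq_of_continuous {X : Type*} [TopologicalSpace X] [PreconnectedSpace X]
    {f : X → ℝ} {c : ℝ} {a : X} (hf : Continuous f) (hc : 0 < c) (hsq : ∀ x, c ≤ f x ^ 2)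
    (ha : 0 < f a) (x : X) : √c ≤ f x := by
  have hpos : 0 < f x := by
    by_contra! hx
    obtain ⟨y, hy⟩ := mem_range_of_exists_le_of_exists_ge hf ⟨x, hx⟩ ⟨a, ha.le⟩
    have := hsq y
    rw [hy] at this
    linarith
  exact Real.sqrt_le_iff.2 ⟨hpos.le, hsq x⟩

lemma tendsto_atTop_atTop_of_pos_le_hasDerivAt {f f' : ℝ → ℝ} {c : ℝ} (hc : 0 < c)
    (hf : ∀ t, HasDerivAt f (f' t) t) (hf' : ∀ t, c ≤ f' t) : Tendsto f atTop atTop := by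
  have hlin : ∀ᶠ t in atTop, f 0 + c * t ≤ f t := by
    filter_upwards [eventually_ge_atTop 0] with t ht
    have := mul_sub_le_image_sub_of_le_deriv (fun s => (hf s).differentiableAt)
      (fun s => (hf' s).trans_eq (hf s).deriv.symm) ht
    linarith
  exact tendsto_atTop_mono' atTop hlin
    (tendsto_atTop_add_const_left _ _ (tendsto_id.const_mul_atTop hc))

lemma hasDerivAt_max_zero_pow (n : ℕ) (u : ℝ) :
    HasDerivAt (fun v : ℝ => max v 0 ^ (n + 2)) ((n + 2) * max u 0 ^ (n + 1)) u := by
  have hne : ∀ v : ℝ, v ≠ 0 →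
      HasDerivAt (fun v : ℝ => max v 0 ^ (n + 2)) ((n + 2) * max v 0 ^ (n + 1)) v := by
    intro v hv
    rcases hv.lt_or_gt with hneg | hpos
    · have hzero : (fun w : ℝ => max w 0 ^ (n + 2)) =ᶠ[𝓝 v] fun _ => 0 := by
        filter_upwards [Iio_mem_nhds hneg] with w hw
        simp [max_eq_right (mem_Iio.1 hw).le]
      simpa [max_eq_right hneg.le] using (hasDerivAt_const v (0 : ℝ)).congr_of_eventuallyEq hzero
    · have hpow : (fun w : ℝ => max w 0 ^ (n + 2)) =ᶠ[𝓝 v] fun w => w ^ (n + 2) := by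
        filter_upwards [Ioi_mem_nhds hpos] with w hw
        rw [max_eq_left (mem_Ioi.1 hw).le]
      simpa [max_eq_left hpos.le] using (hasDerivAt_pow (n + 2) v).congr_of_eventuallyEq hpow
  rcases eq_or_ne u 0 with rfl | hu
  · exact hasDerivAt_of_hasDerivAt_of_ne hne (by fun_prop) (by fun_prop)
  · exact hne u hu

section Newton

variable {V V' q p : ℝ → ℝ}

lemma energy_eq_energy (hV : ∀ x, HasDerivAt V (V' x) x) (hq : ∀ t, HasDerivAt q (p t) t)
    (hp : ∀ t, HasDerivAt p (-V' (q t)) t) (s t : ℝ) :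
    p s ^ 2 / 2 + V (q s) = p t ^ 2 / 2 + V (q t) := by
  have hE : ∀ r, HasDerivAt (fun r => p r ^ 2 / 2 + V (q r)) 0 r := by
    intro r
    have hkin := ((hp r).pow 2).div_const 2
    have hpot := (hV (q r)).comp r (hq r)
    exact (hkin.add hpot).congr_deriv (by norm_num; ring)
  exact is_const_of_deriv_eq_zero (fun r => (hE r).differentiableAt) (fun r => (hE r).deriv) s t

theorem stmt_3_general {M t₀ : ℝ} (hV : ∀ x, HasDerivAt V (V' x) x) (hVM : ∀ x, V x ≤ M)
    (hq : ∀ t, HasDerivAt q (p t) t) (hp : ∀ t, HasDerivAt p (-V' (q t)) t)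
    (hp₀ : 0 < p t₀) (hE : M < p t₀ ^ 2 / 2 + V (q t₀)) :
    StrictMono q ∧ Tendsto q atTop atTop := by
  obtain ⟨δ, hδ_eq⟩ : ∃ δ, δ = p t₀ ^ 2 / 2 + V (q t₀) - M := ⟨_, rfl⟩
  have hδ : 0 < 2 * δ := by linarith
  have hsq : ∀ t, 2 * δ ≤ p t ^ 2 := fun t => by
    linarith [energy_eq_energy hV hq hp t t₀, hVM (q t)]
  have hpc : Continuous p := continuous_iff_continuousAt.2 fun t => (hp t).continuousAt
  have hspeed : ∀ t, √(2 * δ) ≤ p t := sqrt_le_of_le_sq_of_continuous hpc hδ hsq hp₀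
  have hsqrt : 0 < √(2 * δ) := Real.sqrt_pos.2 hδ
  exact ⟨strictMono_of_hasDerivAt_pos hq fun t => hsqrt.trans_le (hspeed t),
    tendsto_atTop_atTop_of_pos_le_hasDerivAt hsqrt hq hspeed⟩

end Newton

lemma g_eq_one_sub_max_pow (x : ℝ) : g x = 1 - max (1 - x ^ 2) 0 ^ 4 := by
  unfold g
  split_ifs with hx <;> rw [← sq_le_one_iff_abs_le_one] at hx
  · rw [max_eq_left (by linarith)]
  · rw [max_eq_right (by linarith)]
    norm_num

lemma g'_eq_mul_max_pow (x : ℝ) : g' x = 8 * x * max (1 - x ^ 2) 0 ^ 3 := by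
  unfold g'
  split_ifs with hx <;> rw [← sq_le_one_iff_abs_le_one] at hx
  · rw [max_eq_left (by linarith)]
  · rw [max_eq_right (by linarith)]
    norm_num

lemma hasDerivAt_g (x : ℝ) : HasDerivAt g (g' x) x := by
  have hinner : HasDerivAt (fun y : ℝ => 1 - y ^ 2) (-(2 * x)) x := by
    simpa using (hasDerivAt_pow 2 x).const_sub 1
  have hcomp := ((hasDerivAt_max_zero_pow 2 (1 - x ^ 2)).comp x hinner).const_sub 1
  rw [funext g_eq_one_sub_max_pow, g'_eq_mul_max_pow]
  exact hcomp.congr_deriv (by norm_num; ring)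

lemma g_le_one (x : ℝ) : g x ≤ 1 := by
  rw [g_eq_one_sub_max_pow, sub_le_self_iff]
  positivity

lemma one_lt_energy_of_sqrt_two_lt {v : ℝ} (hv : √2 < v) : 1 < v ^ 2 / 2 + g 0 := by
  have hsq : 2 < v ^ 2 := Real.lt_sq_of_sqrt_lt hv
  have hg : g 0 = 0 := by simp [g]
  linarith

/-- Lemma ce3 (i): for `p₀ ∈ (√2, 2)`, the solution of (HS) with datum `(0, p₀)` has `q`
increasing on `[0, ∞)` and `q(t) → +∞` as `t → +∞`. -/
theorem stmt_3 (p₀ : ℝ) (hp₀ : p₀ ∈ Ioo (Real.sqrt 2) 2) (q p : ℝ → ℝ)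
    (hsol : IsHSSol q p) (hq0 : q 0 = 0) (hp0 : p 0 = p₀) :
    StrictMonoOn q (Ici 0) ∧ Tendsto q atTop atTop := by
  subst hp0
  have hE : 1 < p 0 ^ 2 / 2 + g (q 0) := hq0.symm ▸ one_lt_energy_of_sqrt_two_lt hp₀.1
  exact (stmt_3_general hasDerivAt_g g_le_one hsol.1 hsol.2
    ((Real.sqrt_nonneg 2).trans_lt hp₀.1) hE).imp_left fun hmono => hmono.strictMonoOn _
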